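/- arXiv:1712.08859 — 3 statements merged into one kernel-verified Lean document; each statement's English description precedes it below -/
import Mathlib

section
/- Let f : ℝ^n → ℝ be differentiable with L-Lipschitz continuous gradient for some L > 0, and let x* ∈ ℝ^n with x* ≥ 0 componentwise. Let Z = { i : x*_i = 0 }, assume Z is nonempty and the nondegeneracy condition ∂_i f(x*) > 0 holds for all i ∈ Z, and set δ = min_{i ∈ Z} ∂_i f(x*). Then for any x ∈ ℝ^n with ‖x − x*‖ ≤ δ/(2L) and any i ∈ Z, the projected coordinate gradient step with step-size 1/L lands exactly at zero: max(0, x_i − (1/L)·∂_i f(x)) = 0. -/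
/-!
A forward step `u ↦ u - α • G u` along an `L`-Lipschitz map `G` is `(1 + α * L)`-Lipschitz. From a
point `x₀` with vanishing `i`-th coordinate, the step reaches a point with `i`-th coordinate
`-α * G x₀ i`. Coordinates are `1`-Lipschitz, so from any point within `α * G x₀ i / (1 + α * L)` of
`x₀` the stepped coordinate is still nonpositive and is projected to `0`. For `α = 1 / L` and
`G = ∇f` this radius is `∂ᵢf(x₀) / (2 * L)`.
-/

theorem norm_sub_smul_sub_sub_smul_le {𝕜 E : Type*} [NormedField 𝕜] [SeminormedAddCommGroup E]
    [NormedSpace 𝕜 E] {G : E → E} {L : ℝ} {x y : E} (hG : ‖G x - G y‖ ≤ L * ‖x - y‖) (α : 𝕜) :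
    ‖(x - α • G x) - (y - α • G y)‖ ≤ (1 + ‖α‖ * L) * ‖x - y‖ :=
  calc ‖(x - α • G x) - (y - α • G y)‖
      = ‖(x - y) - α • (G x - G y)‖ := by rw [sub_sub_sub_comm, smul_sub]
    _ ≤ ‖x - y‖ + ‖α‖ * ‖G x - G y‖ := (norm_sub_le _ _).trans_eq (by rw [norm_smul])
    _ ≤ ‖x - y‖ + ‖α‖ * (L * ‖x - y‖) := by gcongr
    _ = (1 + ‖α‖ * L) * ‖x - y‖ := by ring

theorem apply_le_apply_add_norm_sub_of_norm_le_one {E : Type*} [SeminormedAddCommGroup E]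
    [NormedSpace ℝ E] {φ : StrongDual ℝ E} (hφ : ‖φ‖ ≤ 1) (u v : E) : φ u ≤ φ v + ‖u - v‖ := by
  have hsub : φ u - φ v ≤ ‖u - v‖ := by
    simpa only [map_sub, one_mul] using (le_abs_self _).trans (φ.le_of_opNorm_le hφ (u - v))
  linarith

theorem norm_piLp_proj_le_one {𝕜 ι : Type*} [NontriviallyNormedField 𝕜] [Fintype ι]
    (p : ENNReal) [Fact (1 ≤ p)] (β : ι → Type*) [∀ i, NormedAddCommGroup (β i)]
    [∀ i, NormedSpace 𝕜 (β i)] (i : ι) : ‖(PiLp.proj p β i : PiLp p β →L[𝕜] β i)‖ ≤ 1 :=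
  ContinuousLinearMap.opNorm_le_bound _ zero_le_one fun x ↦
    (PiLp.norm_apply_le x i).trans_eq (one_mul _).symm

theorem one_add_one_div_mul_mul_le {L r δ : ℝ} (hL : 0 < L) (hr : r ≤ δ / (2 * L)) :
    (1 + 1 / L * L) * r ≤ 1 / L * δ :=
  calc (1 + 1 / L * L) * r = 2 * r := by rw [one_div_mul_cancel hL.ne', one_add_one_eq_two]
    _ ≤ 2 * (δ / (2 * L)) := by gcongr
    _ = 1 / L * δ := by field_simp

theorem stmt6_general {E : Type*} [SeminormedAddCommGroup E] [NormedSpace ℝ E]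
    {φ : StrongDual ℝ E} (hφ : ‖φ‖ ≤ 1) {G : E → E} {L α : ℝ} (hα : 0 ≤ α) {x x₀ : E}
    (hG : ‖G x - G x₀‖ ≤ L * ‖x - x₀‖) (hx₀ : φ x₀ = 0)
    (hx : (1 + α * L) * ‖x - x₀‖ ≤ α * φ (G x₀)) :
    max 0 (φ x - α * φ (G x)) = 0 := by
  have hstep : ‖(x - α • G x) - (x₀ - α • G x₀)‖ ≤ (1 + α * L) * ‖x - x₀‖ := by
    simpa only [Real.norm_of_nonneg hα] using norm_sub_smul_sub_sub_smul_le hG α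
  refine max_eq_left ?_
  calc φ x - α * φ (G x) = φ (x - α • G x) := by simp
    _ ≤ φ (x₀ - α • G x₀) + ‖(x - α • G x) - (x₀ - α • G x₀)‖ :=
        apply_le_apply_add_norm_sub_of_norm_le_one hφ _ _
    _ ≤ φ (x₀ - α • G x₀) + α * φ (G x₀) := by gcongr; exact hstep.trans hx
    _ = 0 := by simp [hx₀]

theorem stmt6 (n : ℕ) (f : EuclideanSpace ℝ (Fin n) → ℝ) (hdiff : Differentiable ℝ f)
    (L : ℝ) (hL : 0 < L)
    (hlip : ∀ x y : EuclideanSpace ℝ (Fin n), ‖gradient f x - gradient f y‖ ≤ L * ‖x - y‖)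
    (xstar : EuclideanSpace ℝ (Fin n)) (hpos : ∀ i, 0 ≤ xstar i)
    (Z : Finset (Fin n)) (hZ : ∀ i, i ∈ Z ↔ xstar i = 0) (hZne : Z.Nonempty)
    (hnd : ∀ i ∈ Z, 0 < gradient f xstar i)
    (δ : ℝ) (hδ : δ = Z.inf' hZne (fun i => gradient f xstar i))
    (x : EuclideanSpace ℝ (Fin n)) (hx : ‖x - xstar‖ ≤ δ / (2 * L))
    (i : Fin n) (hi : i ∈ Z) :
    max 0 (x i - (1 / L) * gradient f x i) = 0 := by
  have hδi : δ ≤ gradient f xstar i := hδ.trans_le (Finset.inf'_le _ hi)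
  exact stmt6_general (norm_piLp_proj_le_one 2 (fun _ ↦ ℝ) i) (by positivity) (hlip x xstar)
    ((hZ i).1 hi) (one_add_one_div_mul_mul_le hL (hx.trans (by gcongr; exact hδi)))
end

section
/- Let f : ℝ^n → ℝ be differentiable with L-Lipschitz continuous gradient for some L > 0, let λ > 0, and let x* ∈ ℝ^n. Let Z = { i : x*_i = 0 }, assume Z is nonempty and the nondegeneracy condition |∂_i f(x*)| < λ holds for all i ∈ Z, and set δ = λ − max_{i ∈ Z} |∂_i f(x*)|. Then for any x ∈ ℝ^n with ‖x − x*‖ ≤ δ/(2L) and any i ∈ Z, one has |x_i − (1/L)·∂_i f(x)| ≤ λ/L; consequently the soft-threshold step with threshold λ/L applied to coordinate i yields exactly zero. -/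
/-!
Scaled by `L`, the step `x i - (1 / L) * ∂ᵢ f x` is `L * x i - ∂ᵢ f x`. Within distance
`δ / (2 * L)` of `xstar`, both `L * |x i| = L * |x i - xstar i|` and `|∂ᵢ f x - ∂ᵢ f xstar|` are at
most `δ / 2`, so together they use up at most the margin `δ` by which `|∂ᵢ f xstar|` stays below
`lam`.
-/

/-- The scalar soft-thresholding operator with threshold `τ`, i.e. the proximal map of `τ * |·|`
when `0 ≤ τ`; it is the shrinkage step of the proximal gradient method for `ℓ¹`-regularization. -/
noncomputable def softThreshold (τ z : ℝ) : ℝ :=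
  Real.sign z * max (|z| - τ) 0

theorem softThreshold_eq_zero_of_abs_le {τ z : ℝ} (h : |z| ≤ τ) : softThreshold τ z = 0 := by
  rw [softThreshold, max_eq_right (sub_nonpos.2 h), mul_zero]

theorem norm_sub_one_div_smul_le {E : Type*} [SeminormedAddCommGroup E] [NormedSpace ℝ E]
    {L : ℝ} (hL : 0 < L) (u v w : E) :
    ‖u - (1 / L) • v‖ ≤ (L * ‖u‖ + ‖v - w‖ + ‖w‖) / L :=
  calc ‖u - (1 / L) • v‖ ≤ ‖u‖ + ‖(1 / L) • v‖ := norm_sub_le _ _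
    _ = (L * ‖u‖ + ‖v‖) / L := by
      rw [norm_smul, Real.norm_of_nonneg (one_div_nonneg.2 hL.le)]
      field_simp
    _ ≤ (L * ‖u‖ + ‖v - w‖ + ‖w‖) / L := by
      rw [add_assoc]
      gcongr
      exact norm_le_norm_sub_add v w

theorem stmt7_general {ι : Type*} [Fintype ι] {p : ENNReal} [Fact (1 ≤ p)]
    {g : PiLp p (fun _ : ι => ℝ) → PiLp p (fun _ : ι => ℝ)} {L lam δ : ℝ} (hL : 0 < L)
    {xstar x : PiLp p (fun _ : ι => ℝ)} (hlip : ‖g x - g xstar‖ ≤ L * ‖x - xstar‖)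
    {i : ι} (hi : xstar i = 0) (hδ : δ ≤ lam - |g xstar i|) (hx : ‖x - xstar‖ ≤ δ / (2 * L)) :
    |x i - (1 / L) * g x i| ≤ lam / L ∧
      softThreshold (lam / L) (x i - (1 / L) * g x i) = 0 := by
  have hradius : L * ‖x - xstar‖ ≤ δ / 2 := by
    rw [le_div_iff₀ (by positivity)] at hx
    linarith
  have hcoord : L * |x i| ≤ δ / 2 := by
    have hle : |x i| ≤ ‖x - xstar‖ := by
      simpa only [PiLp.sub_apply, hi, sub_zero, Real.norm_eq_abs] using
        PiLp.norm_apply_le (x - xstar) i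
    exact (mul_le_mul_of_nonneg_left hle hL.le).trans hradius
  have hgrad : |g x i - g xstar i| ≤ δ / 2 :=
    (PiLp.norm_apply_le (g x - g xstar) i).trans (hlip.trans hradius)
  have hstep : |x i - (1 / L) * g x i| ≤ lam / L :=
    calc |x i - (1 / L) * g x i|
        ≤ (L * |x i| + |g x i - g xstar i| + |g xstar i|) / L :=
          norm_sub_one_div_smul_le hL (x i) (g x i) (g xstar i)
      _ ≤ lam / L := by
          gcongr
          linarith
  exact ⟨hstep, softThreshold_eq_zero_of_abs_le hstep⟩

theorem stmt7 (n : ℕ) (f : EuclideanSpace ℝ (Fin n) → ℝ) (hdiff : Differentiable ℝ f)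
    (L : ℝ) (hL : 0 < L) (lam : ℝ) (hlam : 0 < lam)
    (hlip : ∀ x y : EuclideanSpace ℝ (Fin n), ‖gradient f x - gradient f y‖ ≤ L * ‖x - y‖)
    (xstar : EuclideanSpace ℝ (Fin n))
    (Z : Finset (Fin n)) (hZ : ∀ i, i ∈ Z ↔ xstar i = 0) (hZne : Z.Nonempty)
    (hnd : ∀ i ∈ Z, |gradient f xstar i| < lam)
    (δ : ℝ) (hδ : δ = lam - Z.sup' hZne (fun i => |gradient f xstar i|))
    (x : EuclideanSpace ℝ (Fin n)) (hx : ‖x - xstar‖ ≤ δ / (2 * L))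
    (i : Fin n) (hi : i ∈ Z) :
    |x i - (1 / L) * gradient f x i| ≤ lam / L ∧
      Real.sign (x i - (1 / L) * gradient f x i) *
        max (|x i - (1 / L) * gradient f x i| - lam / L) 0 = 0 :=
  stmt7_general hL (hlip x xstar) ((hZ i).1 hi)
    (hδ.trans_le (sub_le_sub_left (Z.le_sup' (fun i => |gradient f xstar i|) hi) lam)) hx
end

section
/- Let f : ℝ^n → ℝ be differentiable with L-Lipschitz continuous gradient for some L > 0, and let x* ∈ ℝ^n with x* ≥ 0 componentwise, Z = { i : x*_i = 0 }, and nondegeneracy ∂_i f(x*) > 0 for all i ∈ Z. Suppose the sequence (x^k) is generated by a coordinate-wise projected gradient method: for each k there is a coordinate i_k such that x^{k+1}_j = x^k_j for all j ≠ i_k and x^{k+1}_{i_k} = max(0, x^k_{i_k} − (1/L)·∂_{i_k} f(x^k)). If x^k → x*, then there exists a finite K such that x^k_i = 0 for all k ≥ K and all i ∈ Z. -/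
/-!
Once the trial point of an active coordinate, whose limit is `x*ᵢ - α ∂ᵢf(x*) < x*ᵢ`, has dropped
below the bound, every update of that coordinate lands exactly on the bound. From then on the
coordinate either keeps its current value or jumps to its limit, and a convergent sequence of this
kind must jump unless it already sits at its limit.
-/

open Filter Topology

theorem eventually_eq_of_tendsto_of_eventually_succ_eq_or {X : Type*} [TopologicalSpace X]
    [T1Space X] {u : ℕ → X} {a : X} (hu : Tendsto u atTop (𝓝 a))
    (hstep : ∀ᶠ k in atTop, u (k + 1) = u k ∨ u (k + 1) = a) :
    ∀ᶠ k in atTop, u k = a := by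
  obtain ⟨K, hK⟩ := eventually_atTop.mp hstep
  have stay_or_limit : ∀ k ≥ K, u k = u K ∨ u k = a := fun k hk => by
    induction k, hk using Nat.le_induction with
    | base => exact .inl rfl
    | succ k hk ih =>
      rcases hK k hk with hstay | hjump
      · rwa [hstay]
      · exact .inr hjump
  by_cases hKa : u K = a
  · filter_upwards [eventually_ge_atTop K] with k hk
    exact (stay_or_limit k hk).elim (·.trans hKa) id
  · filter_upwards [eventually_ge_atTop K, hu.eventually_ne (Ne.symm hKa)] with k hk hne
    exact (stay_or_limit k hk).resolve_left hne

theorem eventually_eq_of_tendsto_of_succ_eq_or_max {X : Type*} [LinearOrder X]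
    [TopologicalSpace X] [OrderClosedTopology X] {u p : ℕ → X} {a b : X}
    (hu : Tendsto u atTop (𝓝 a)) (hp : Tendsto p atTop (𝓝 b)) (hba : b < a)
    (hstep : ∀ k, u (k + 1) = u k ∨ u (k + 1) = max a (p k)) :
    ∀ᶠ k in atTop, u k = a := by
  refine eventually_eq_of_tendsto_of_eventually_succ_eq_or hu ?_
  filter_upwards [hp.eventually_lt_const hba] with k hk
  simpa only [max_eq_left hk.le] using hstep k

theorem stmt8_general {ι : Type*} {ℓ xstar dstar : ι → ℝ} {x d : ℕ → ι → ℝ} {α : ℝ} (hα : 0 < α)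
    (hactive : {i | xstar i = ℓ i}.Finite) (hnd : ∀ i, xstar i = ℓ i → 0 < dstar i)
    (hstep : ∀ k i, x (k + 1) i = x k i ∨ x (k + 1) i = max (ℓ i) (x k i - α * d k i))
    (hx : Tendsto x atTop (𝓝 xstar)) (hd : Tendsto d atTop (𝓝 dstar)) :
    ∀ᶠ k in atTop, ∀ i, xstar i = ℓ i → x k i = ℓ i := by
  refine (eventually_all_finite hactive).mpr fun i (hi : xstar i = ℓ i) => ?_
  have hxi : Tendsto (fun k => x k i) atTop (𝓝 (ℓ i)) := hi ▸ hx.apply_nhds i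
  have htrial : Tendsto (fun k => x k i - α * d k i) atTop (𝓝 (ℓ i - α * dstar i)) :=
    hxi.sub ((hd.apply_nhds i).const_mul α)
  exact eventually_eq_of_tendsto_of_succ_eq_or_max hxi htrial
    (sub_lt_self _ (mul_pos hα (hnd i hi))) fun k => hstep k i

theorem stmt8 (n : ℕ) (f : EuclideanSpace ℝ (Fin n) → ℝ) (hdiff : Differentiable ℝ f)
    (L : ℝ) (hL : 0 < L)
    (hlip : ∀ x y : EuclideanSpace ℝ (Fin n), ‖gradient f x - gradient f y‖ ≤ L * ‖x - y‖)
    (xstar : EuclideanSpace ℝ (Fin n)) (hpos : ∀ i, 0 ≤ xstar i)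
    (hnd : ∀ i, xstar i = 0 → 0 < gradient f xstar i)
    (x : ℕ → EuclideanSpace ℝ (Fin n)) (isel : ℕ → Fin n)
    (hupd1 : ∀ (k : ℕ) (j : Fin n), j ≠ isel k → x (k + 1) j = x k j)
    (hupd2 : ∀ k : ℕ,
      x (k + 1) (isel k) = max 0 (x k (isel k) - (1 / L) * gradient f (x k) (isel k)))
    (hconv : Filter.Tendsto x Filter.atTop (nhds xstar)) :
    ∃ K : ℕ, ∀ k, K ≤ k → ∀ i, xstar i = 0 → x k i = 0 := by
  have hgrad : Continuous (gradient f) :=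
    (LipschitzWith.of_dist_le' (by simpa only [dist_eq_norm] using hlip)).continuous
  have hofLp := PiLp.continuous_ofLp 2 fun _ : Fin n => ℝ
  exact eventually_atTop.mp <| stmt8_general (one_div_pos.mpr hL) (Set.toFinite _) hnd
    (fun k i => (eq_or_ne i (isel k)).elim (fun h => .inr (h ▸ hupd2 k)) (.inl ∘ hupd1 k i))
    ((hofLp.tendsto xstar).comp hconv) (((hofLp.comp hgrad).tendsto xstar).comp hconv)
end
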